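/- Let (X, A_X) be a network, δ > 0, and let Z be the set of equivalence classes of X under the relation x ∼ x' iff u^U_X(x,x') ≤ δ, where u^U_X is the unilateral ultrametric. Endow Z with the dissimilarity A_Z(z,z') = min over x in the class z and x' in the class z' of A_X(x,x') for z ≠ z', and A_Z(z,z) = 0. If Z has at least two elements, then the separation of the quotient network satisfies sep(Z, A_Z) > δ. -/

import Mathlib

noncomputable section

/-- A dissimilarity function on a node set: nonnegative and zero exactly on the diagonal.
It need not be symmetric nor satisfy the triangle inequality. -/
def IsDissim {X : Type} (A : X → X → ℝ) : Prop :=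
  (∀ x x', 0 ≤ A x x') ∧ (∀ x x', A x x' = 0 ↔ x = x')

/-- A symmetric dissimilarity. -/
def IsSym {X : Type} (A : X → X → ℝ) : Prop := ∀ x x', A x x' = A x' x

/-- An ultrametric: nonnegative, zero exactly on the diagonal, symmetric, and
satisfying the strong triangle inequality. -/
def IsUltrametric {X : Type} (u : X → X → ℝ) : Prop :=
  (∀ x x', 0 ≤ u x x') ∧ (∀ x x', u x x' = 0 ↔ x = x') ∧
    (∀ x x', u x x' = u x' x) ∧
    (∀ x x' x'', u x x'' ≤ max (u x x') (u x' x''))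

/-- The cost of the chain `x :: l`: the maximum dissimilarity over consecutive links. -/
def chainCost {X : Type} (A : X → X → ℝ) : X → List X → ℝ
  | _, [] => 0
  | x, y :: l => max (A x y) (chainCost A y l)

/-- The set of costs of chains from `x` to `x'`. -/
def chainCosts {X : Type} (A : X → X → ℝ) (x x' : X) : Set ℝ :=
  {c | ∃ l : List X, (x :: l).getLast (List.cons_ne_nil x l) = x' ∧ chainCost A x l = c}

/-- The directed minimum chain cost `ũ*_X(x,x')`: minimum cost over all chains from `x` to `x'`. -/
def minChainCost {X : Type} (A : X → X → ℝ) (x x' : X) : ℝ :=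
  sInf (chainCosts A x x')

/-- The nonreciprocal ultrametric `u^NR`. -/
def nonrecipUltra {X : Type} (A : X → X → ℝ) (x x' : X) : ℝ :=
  max (minChainCost A x x') (minChainCost A x' x)

/-- The reciprocal ultrametric `u^R`. -/
def recipUltra {X : Type} (A : X → X → ℝ) (x x' : X) : ℝ :=
  minChainCost (fun a b => max (A a b) (A b a)) x x'

/-- The unilateral ultrametric `u^U`. -/
def uniUltra {X : Type} (A : X → X → ℝ) (x x' : X) : ℝ :=
  minChainCost (fun a b => min (A a b) (A b a)) x x'

/-- The minimum loop cost `mlc(X, A_X)`: minimum cost over loops, i.e. chains from some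
node `x` back to itself containing at least one node different from `x`. -/
def mlc {X : Type} (A : X → X → ℝ) : ℝ :=
  sInf {c | ∃ (x : X) (l : List X),
    (x :: l).getLast (List.cons_ne_nil x l) = x ∧ (∃ y ∈ l, y ≠ x) ∧ chainCost A x l = c}

/-- The separation `sep(X, A_X)`: minimum dissimilarity over pairs of distinct nodes. -/
def sep {X : Type} (A : X → X → ℝ) : ℝ :=
  sInf {c | ∃ x x' : X, x ≠ x' ∧ A x x' = c}

/-- A hierarchical clustering method: assigns to every (finite) network an output
two-variable function on the same node set. -/
abbrev HCMethod := ∀ (X : Type) [Fintype X], (X → X → ℝ) → X → X → ℝ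

/-- A hierarchical clustering method outputs an ultrametric on every network. -/
def IsHCMethod (H : HCMethod) : Prop :=
  ∀ (X : Type) [Fintype X] (A : X → X → ℝ), IsDissim A → IsUltrametric (H X A)

/-- `p, q` are the two (distinct) nodes of a two-node set. -/
def TwoNode {X : Type} (p q : X) : Prop := p ≠ q ∧ ∀ x : X, x = p ∨ x = q

/-- Axiom of Value (A1): on every two-node network the output clusters the two nodes at
the maximum of the two dissimilarities. -/
def AxiomValue (H : HCMethod) : Prop :=
  ∀ (X : Type) [Fintype X] (p q : X), TwoNode p q →
    ∀ A : X → X → ℝ, IsDissim A → H X A p q = max (A p q) (A q p)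

/-- Axiom of Transformation (A2): dissimilarity-reducing maps do not increase output values. -/
def AxiomTransform (H : HCMethod) : Prop :=
  ∀ (X Y : Type) [Fintype X] [Fintype Y] (AX : X → X → ℝ) (AY : Y → Y → ℝ),
    IsDissim AX → IsDissim AY →
    ∀ φ : X → Y, (∀ x x', AY (φ x) (φ x') ≤ AX x x') →
    ∀ x x' : X, H Y AY (φ x) (φ x') ≤ H X AX x x'

/-- The canonical dissimilarity `A_{n,α,β}` on `Fin n`: `α` for `i > j`, `β` for `i < j`,
`0` on the diagonal. -/
def canonDissim (n : ℕ) (α β : ℝ) : Fin n → Fin n → ℝ :=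
  fun i j => if i = j then 0 else if j < i then α else β

/-- Extended Axiom of Value (A1'): on every permuted canonical network `Δ_n(α,β,Π)` the
output ultrametric equals `max(α,β)` off the diagonal. -/
def ExtAxiomValue (H : HCMethod) : Prop :=
  ∀ (n : ℕ) (α β : ℝ), 0 < α → 0 < β → ∀ π : Equiv.Perm (Fin n),
    ∀ i j : Fin n, i ≠ j →
      H (Fin n) (fun i j => canonDissim n α β (π i) (π j)) i j = max α β

/-- Alternative Axiom of Value (A1''): on every two-node network the output clusters the
two nodes at the minimum of the two dissimilarities. -/
def AltAxiomValue (H : HCMethod) : Prop :=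
  ∀ (X : Type) [Fintype X] (p q : X), TwoNode p q →
    ∀ A : X → X → ℝ, IsDissim A → H X A p q = min (A p q) (A q p)

/-- Agnostic Axiom of Value (A1'''): on every two-node network the output value lies
between the minimum and maximum of the two dissimilarities. -/
def AgnAxiomValue (H : HCMethod) : Prop :=
  ∀ (X : Type) [Fintype X] (p q : X), TwoNode p q →
    ∀ A : X → X → ℝ, IsDissim A →
      min (A p q) (A q p) ≤ H X A p q ∧ H X A p q ≤ max (A p q) (A q p)

/-!
The two-node chain `[x, x']` has unilateral cost `min (A x x') (A x' x)`, so `u^U` never exceeds a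
nonnegative direct dissimilarity: nodes in distinct classes at resolution `δ` satisfy `δ < A x x'`.
The bound stays strict after minimizing over representatives, and then over pairs of classes,
because both minima are attained.
-/

theorem csInf_mem_of_isWF {α : Type*} [ConditionallyCompleteLinearOrder α] {S : Set α}
    (hS : S.IsWF) (hne : S.Nonempty) : sInf S ∈ S :=
  have hleast : IsLeast S (hS.min hne) := ⟨hS.min_mem hne, fun _ => hS.min_le hne⟩
  hleast.csInf_mem

section Chains

variable {X : Type} (A : X → X → ℝ)

theorem chainCost_nonneg (x : X) (l : List X) : 0 ≤ chainCost A x l := by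
  induction l generalizing x with
  | nil => exact le_rfl
  | cons y l ih => exact le_max_of_le_right (ih y)

theorem bddBelow_chainCosts (x x' : X) : BddBelow (chainCosts A x x') :=
  ⟨0, by rintro _ ⟨l, -, rfl⟩; exact chainCost_nonneg A x l⟩

-- `chainCost` takes the maximum from `0` upwards, hence the truncation.
theorem minChainCost_le_max_zero (x x' : X) : minChainCost A x x' ≤ max (A x x') 0 :=
  csInf_le (bddBelow_chainCosts A x x') ⟨[x'], rfl, rfl⟩

theorem uniUltra_le_max_zero (x x' : X) : uniUltra A x x' ≤ max (A x x') 0 :=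
  (minChainCost_le_max_zero _ x x').trans (max_le_max_right 0 (min_le_left _ _))

end Chains

theorem lt_sep {X : Type} [Nontrivial X] {A : X → X → ℝ} {δ : ℝ}
    (hwf : {c | ∃ x x' : X, x ≠ x' ∧ A x x' = c}.IsWF)
    (hlt : ∀ x x' : X, x ≠ x' → δ < A x x') : δ < sep A := by
  obtain ⟨p, q, hpq⟩ := exists_pair_ne X
  obtain ⟨x, x', hne, hsep⟩ := csInf_mem_of_isWF hwf ⟨A p q, p, q, hpq, rfl⟩
  exact (hlt x x' hne).trans_eq hsep

section Quotient

variable {X : Type} {A : X → X → ℝ} {s : Setoid X}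

open Classical in
/-- The dissimilarity `A_Z` on the classes of `s`: the least dissimilarity from a node of the first
class to a node of the second, and `0` on the diagonal. The minimum is encoded as an infimum, which
need not be attained when `A` takes infinitely many values. -/
def quotientDissim (A : X → X → ℝ) (s : Setoid X) (z z' : Quotient s) : ℝ :=
  if z = z' then 0 else
    sInf {c | ∃ x x' : X, Quotient.mk s x = z ∧ Quotient.mk s x' = z' ∧ A x x' = c}

theorem eq_quotientDissim {AZ : Quotient s → Quotient s → ℝ}
    (hoff : ∀ z z' : Quotient s, z ≠ z' → AZ z z' = sInf {c | ∃ x x' : X,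
      Quotient.mk s x = z ∧ Quotient.mk s x' = z' ∧ A x x' = c})
    (hdiag : ∀ z : Quotient s, AZ z z = 0) : AZ = quotientDissim A s := by
  funext z z'
  unfold quotientDissim
  split_ifs with h
  · exact h ▸ hdiag z
  · exact hoff z z' h

theorem exists_rep_eq_quotientDissim (hwf : (Set.range (Function.uncurry A)).IsWF)
    {z z' : Quotient s} (hne : z ≠ z') :
    ∃ x x' : X, Quotient.mk s x = z ∧ Quotient.mk s x' = z' ∧ A x x' = quotientDissim A s z z' := by
  rw [quotientDissim, if_neg hne]
  have hsub : {c | ∃ x x' : X, Quotient.mk s x = z ∧ Quotient.mk s x' = z' ∧ A x x' = c} ⊆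
      Set.range (Function.uncurry A) := by
    rintro _ ⟨x, x', -, -, rfl⟩
    exact ⟨(x, x'), rfl⟩
  obtain ⟨y, hy⟩ := Quotient.exists_rep z
  obtain ⟨y', hy'⟩ := Quotient.exists_rep z'
  exact csInf_mem_of_isWF (hwf.mono hsub) ⟨A y y', y, y', hy, hy', rfl⟩

theorem isWF_quotientDissim_offDiag (hwf : (Set.range (Function.uncurry A)).IsWF) :
    {c | ∃ z z' : Quotient s, z ≠ z' ∧ quotientDissim A s z z' = c}.IsWF := by
  refine hwf.mono ?_
  rintro _ ⟨z, z', hne, rfl⟩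
  obtain ⟨x, x', -, -, hxx'⟩ := exists_rep_eq_quotientDissim hwf hne
  exact ⟨(x, x'), hxx'⟩

theorem lt_quotientDissim {δ : ℝ} (hwf : (Set.range (Function.uncurry A)).IsWF)
    (hlt : ∀ x x' : X, ¬ s x x' → δ < A x x') {z z' : Quotient s} (hne : z ≠ z') :
    δ < quotientDissim A s z z' := by
  obtain ⟨x, x', rfl, rfl, hxx'⟩ := exists_rep_eq_quotientDissim hwf hne
  exact (hlt x x' (mt Quotient.sound hne)).trans_eq hxx'

end Quotient

/-- Well-foundedness makes every minimum attained; it also covers infinite networks with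
dissimilarities in `ℕ`. -/
theorem quotient_sep_gt_delta_general {X : Type} {A : X → X → ℝ} {δ : ℝ} {s : Setoid X}
    [Nontrivial (Quotient s)] (hwf : (Set.range (Function.uncurry A)).IsWF) (hδ : 0 ≤ δ)
    (hs : ∀ x x' : X, uniUltra A x x' ≤ δ → s x x') :
    δ < sep (quotientDissim A s) := by
  have lt_of_not_rel : ∀ x x' : X, ¬ s x x' → δ < A x x' := by
    intro x x' hxx'
    have hmax : δ < max (A x x') 0 :=
      (not_le.1 (mt (hs x x') hxx')).trans_le (uniUltra_le_max_zero A x x')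
    exact (lt_max_iff.1 hmax).resolve_right hδ.not_gt
  exact lt_sep (isWF_quotientDissim_offDiag hwf) fun _ _ => lt_quotientDissim hwf lt_of_not_rel

/-- The quotient network of unilateral equivalence classes at resolution `δ`
has separation greater than `δ`. -/
theorem quotient_sep_gt_delta
    (X : Type) [Fintype X] (A : X → X → ℝ) (hA : IsDissim A)
    (δ : ℝ) (hδ : 0 < δ) (s : Setoid X)
    (hs : ∀ x x' : X, s.r x x' ↔ uniUltra A x x' ≤ δ)
    (AZ : Quotient s → Quotient s → ℝ)
    (hAZ : ∀ z z' : Quotient s, z ≠ z' →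
      AZ z z' = sInf {c | ∃ x x' : X,
        Quotient.mk s x = z ∧ Quotient.mk s x' = z' ∧ A x x' = c})
    (hAZ0 : ∀ z : Quotient s, AZ z z = 0)
    (hZ : ∃ z z' : Quotient s, z ≠ z') :
    δ < sep AZ := by
  have : Nontrivial (Quotient s) := ⟨hZ⟩
  rw [eq_quotientDissim hAZ hAZ0]
  exact quotient_sep_gt_delta_general (Set.finite_range _).isWF hδ.le fun x x' => (hs x x').2
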